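/- Let (W^-, W^+, ζ) be a random vector with W^-, W^+ ≥ 0, |ζ| ≤ 1 almost surely, 0 < E[W^-] < ∞, 0 < E[W^+] < ∞, and set θ := E[W^- + W^+]. Let Z^- and Z^+ be ℕ-valued random variables that are conditionally independent given (W^-, W^+, ζ), with conditional distributions Poisson with means E[W^+]·W^- /θ and E[W^-]·W^+/θ, respectively. Suppose P(W^- > x) ∈ RV(−α) for some α > 1, and P(W^- /(W^+ ∨ 1) > x) = o(P(W^- > x)) as x → ∞. Then E[1(ζ·Z^- /(Z^+ + 1) > x)·W^+] = o(E[W^+]·P(Z^- > x)) as x → ∞; that is, for the size-biased vector (𝒩, 𝒞) arising from the inhomogeneous random digraph, P(𝒞·𝒩 > x) = o(P(𝒩₀ > x)) where 𝒩₀ has the distribution of Z^-. -/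

import Mathlib

open MeasureTheory ProbabilityTheory Filter Asymptotics Set

/-- The (real-valued) tail probability `P(X > x)`. -/
noncomputable def tailP {Ω : Type*} [MeasurableSpace Ω] (μ : Measure Ω) (X : Ω → ℝ) (x : ℝ) : ℝ :=
  (μ {ω | X ω > x}).toReal

/-- `f` is a regularly varying tail with index `-α`. -/
def RVtail (f : ℝ → ℝ) (α : ℝ) : Prop :=
  ∀ lam : ℝ, 0 < lam →
    Tendsto (fun x => f (lam * x) / f x) atTop (nhds (lam ^ (-α)))

/-- Poisson probability mass function with (real) mean `lam`. -/
noncomputable def poissonPdf (lam : ℝ) (n : ℕ) : ℝ :=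
  Real.exp (-lam) * lam ^ n / (n.factorial : ℝ)

open scoped ENNReal

lemma poissonPdf_nonneg {m : ℝ} (hm : 0 ≤ m) (n : ℕ) : 0 ≤ poissonPdf m n := by
  unfold poissonPdf; positivity

lemma measurable_poissonPdf (n : ℕ) : Measurable fun m => poissonPdf m n := by
  unfold poissonPdf; fun_prop

/-- Probability generating function of the Poisson distribution. -/
lemma tsum_poissonPdf_mul_pow {m t : ℝ} (hm : 0 ≤ m) (ht : 0 ≤ t) :
    ∑' n, ENNReal.ofReal (poissonPdf m n) * ENNReal.ofReal (t ^ n)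
      = ENNReal.ofReal (Real.exp (m * (t - 1))) := by
  have hs : HasSum (fun n => poissonPdf m n * t ^ n) (Real.exp (m * (t - 1))) := by
    have h := (NormedSpace.expSeries_div_hasSum_exp (m * t)).mul_left (Real.exp (-m))
    rw [← Real.exp_eq_exp_ℝ, ← Real.exp_add] at h
    rw [show m * (t - 1) = -m + m * t by ring]
    refine h.congr_fun fun n => ?_
    unfold poissonPdf
    rw [mul_pow]
    ring
  rw [← hs.tsum_eq, ENNReal.ofReal_tsum_of_nonneg
    (fun n => mul_nonneg (poissonPdf_nonneg hm n) (by positivity)) hs.summable]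
  exact tsum_congr fun n => (ENNReal.ofReal_mul (poissonPdf_nonneg hm n)).symm

lemma tsum_poissonPdf {m : ℝ} (hm : 0 ≤ m) :
    ∑' n, ENNReal.ofReal (poissonPdf m n) = 1 := by
  simpa using tsum_poissonPdf_mul_pow hm zero_le_one

/-- Chernoff bound for a set of integers on which `exp u ≤ t ^ n`. -/
lemma poisson_chernoff {m t u : ℝ} (hm : 0 ≤ m) (ht : 0 ≤ t) {A : Set ℕ}
    (hA : ∀ n ∈ A, Real.exp u ≤ t ^ n) :
    ∑' n, ENNReal.ofReal (poissonPdf m n) * A.indicator 1 n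
      ≤ ENNReal.ofReal (Real.exp (m * (t - 1) - u)) := by
  rw [sub_eq_add_neg, Real.exp_add, ENNReal.ofReal_mul (by positivity),
    ← tsum_poissonPdf_mul_pow hm ht, ← ENNReal.tsum_mul_right]
  refine ENNReal.tsum_le_tsum fun n => ?_
  rw [mul_assoc]
  gcongr
  by_cases hn : n ∈ A
  · rw [Set.indicator_of_mem hn, ← ENNReal.ofReal_mul (by positivity), Pi.one_apply,
      ENNReal.one_le_ofReal, Real.exp_neg]
    have := hA n hn
    rw [← div_eq_mul_inv, le_div_iff₀ (by positivity)]
    linarith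
  · simp [hn]

lemma poisson_upper_tail {m x : ℝ} (hm : 0 ≤ m) :
    ∑' n, ENNReal.ofReal (poissonPdf m n) * {n : ℕ | x < n}.indicator 1 n
      ≤ ENNReal.ofReal (Real.exp (2 * m - x)) := by
  refine (poisson_chernoff (t := Real.exp 1) (u := x) hm (by positivity) ?_).trans ?_
  · intro n hn
    rw [← Real.exp_nat_mul, mul_one]
    exact Real.exp_le_exp.2 (le_of_lt hn)
  · refine ENNReal.ofReal_le_ofReal (Real.exp_le_exp.2 ?_)
    nlinarith [Real.exp_one_lt_d9]

lemma poisson_lower_tail {m x : ℝ} (hm : 0 < m) (hx : x ≤ m / 4) :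
    ∑' n, ENNReal.ofReal (poissonPdf m n) * {n : ℕ | (n : ℝ) ≤ x}.indicator 1 n
      ≤ ENNReal.ofReal (4 / m) := by
  refine (poisson_chernoff (t := Real.exp (-1)) (u := -x) hm.le (by positivity) ?_).trans ?_
  · intro n hn
    rw [← Real.exp_nat_mul]
    have : (n : ℝ) ≤ x := hn
    exact Real.exp_le_exp.2 (by linarith)
  · refine ENNReal.ofReal_le_ofReal ?_
    have h1 : Real.exp (-1) ≤ 1 / 2 := by
      have := Real.exp_neg_one_lt_d9
      linarith
    have h2 : m * (Real.exp (-1) - 1) - -x ≤ -(m / 4) := by nlinarith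
    refine (Real.exp_le_exp.2 h2).trans ?_
    rw [Real.exp_neg, inv_le_comm₀ (by positivity) (by positivity), inv_div]
    linarith [Real.add_one_le_exp (m / 4)]

/-- `Z` is conditionally Poisson with mean `M` given `T`. -/
def MixedPoisson {Ω E : Type*} [MeasurableSpace Ω] [MeasurableSpace E] (μ : Measure Ω)
    (Z : Ω → ℕ) (T : Ω → E) (M : Ω → ℝ) : Prop :=
  ∀ n s, MeasurableSet s → μ {ω | Z ω = n ∧ T ω ∈ s}
    = ∫⁻ ω in {ω | T ω ∈ s}, ENNReal.ofReal (poissonPdf (M ω) n) ∂μ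

/-- `Z₁` and `Z₂` are conditionally independent Poisson with means `M₁` and `M₂` given `T`. -/
def JointMixedPoisson {Ω E : Type*} [MeasurableSpace Ω] [MeasurableSpace E] (μ : Measure Ω)
    (Z₁ Z₂ : Ω → ℕ) (T : Ω → E) (M₁ M₂ : Ω → ℝ) : Prop :=
  ∀ m n s, MeasurableSet s → μ {ω | Z₁ ω = m ∧ Z₂ ω = n ∧ T ω ∈ s}
    = ∫⁻ ω in {ω | T ω ∈ s},
        ENNReal.ofReal (poissonPdf (M₁ ω) m) * ENNReal.ofReal (poissonPdf (M₂ ω) n) ∂μ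

lemma JointMixedPoisson.symm {Ω E : Type*} [MeasurableSpace Ω] [MeasurableSpace E]
    {μ : Measure Ω} {Z₁ Z₂ : Ω → ℕ} {T : Ω → E} {M₁ M₂ : Ω → ℝ}
    (h : JointMixedPoisson μ Z₁ Z₂ T M₁ M₂) : JointMixedPoisson μ Z₂ Z₁ T M₂ M₁ := by
  intro m n s hs
  simp_rw [mul_comm (ENNReal.ofReal (poissonPdf (M₂ _) m)), ← h n m s hs, and_left_comm]

lemma JointMixedPoisson.fst {Ω E : Type*} [MeasurableSpace Ω] [MeasurableSpace E]
    {μ : Measure Ω} {Z₁ Z₂ : Ω → ℕ} {T : Ω → E} {M₁ M₂ : Ω → ℝ}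
    (h : JointMixedPoisson μ Z₁ Z₂ T M₁ M₂) (hZ₁ : Measurable Z₁) (hZ₂ : Measurable Z₂)
    (hT : Measurable T) (hM₁ : Measurable M₁) (hM₂ : Measurable M₂)
    (hM₂0 : ∀ᵐ ω ∂μ, 0 ≤ M₂ ω) : MixedPoisson μ Z₁ T M₁ := by
  intro m s hs
  have hU : {ω | Z₁ ω = m ∧ T ω ∈ s} = ⋃ n, {ω | Z₁ ω = m ∧ Z₂ ω = n ∧ T ω ∈ s} := by
    ext ω; simp
  rw [hU, measure_iUnion]
  · simp_rw [fun n => h m n s hs]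
    have hd : ∀ n, Measurable fun ω =>
        ENNReal.ofReal (poissonPdf (M₁ ω) m) * ENNReal.ofReal (poissonPdf (M₂ ω) n) := fun n =>
      ((measurable_poissonPdf m).comp hM₁).ennreal_ofReal.mul
        ((measurable_poissonPdf n).comp hM₂).ennreal_ofReal
    rw [← lintegral_tsum fun n => (hd n).aemeasurable]
    refine lintegral_congr_ae (ae_restrict_of_ae ?_)
    filter_upwards [hM₂0] with ω hω
    rw [ENNReal.tsum_mul_left, tsum_poissonPdf hω, mul_one]
  · intro i j hij
    refine Set.disjoint_left.2 fun ω hi hj => hij ?_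
    exact hi.2.1.symm.trans hj.2.1
  · intro n
    exact (hZ₁ (measurableSet_singleton m)).inter
      ((hZ₂ (measurableSet_singleton n)).inter (hT hs))

/-- Integration of a function of `T` over a level set of `(Z₁, Z₂)`. -/
lemma JointMixedPoisson.setLIntegral {Ω E : Type*} [MeasurableSpace Ω] [MeasurableSpace E]
    {μ : Measure Ω} {Z₁ Z₂ : Ω → ℕ} {T : Ω → E} {M₁ M₂ : Ω → ℝ}
    (h : JointMixedPoisson μ Z₁ Z₂ T M₁ M₂)
    (hT : Measurable T) (hM₁ : Measurable M₁) (hM₂ : Measurable M₂) (m n : ℕ)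
    {g : E → ℝ≥0∞} (hg : Measurable g) :
    ∫⁻ ω in {ω | Z₁ ω = m ∧ Z₂ ω = n}, g (T ω) ∂μ
      = ∫⁻ ω, ENNReal.ofReal (poissonPdf (M₁ ω) m) * ENNReal.ofReal (poissonPdf (M₂ ω) n)
          * g (T ω) ∂μ := by
  have hd : Measurable fun ω =>
      ENNReal.ofReal (poissonPdf (M₁ ω) m) * ENNReal.ofReal (poissonPdf (M₂ ω) n) :=
    ((measurable_poissonPdf m).comp hM₁).ennreal_ofReal.mul
      ((measurable_poissonPdf n).comp hM₂).ennreal_ofReal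
  have hmap : (μ.restrict {ω | Z₁ ω = m ∧ Z₂ ω = n}).map T = (μ.withDensity fun ω =>
      ENNReal.ofReal (poissonPdf (M₁ ω) m) * ENNReal.ofReal (poissonPdf (M₂ ω) n)).map T := by
    ext s hs
    rw [Measure.map_apply hT hs, Measure.map_apply hT hs, Measure.restrict_apply (hT hs),
      withDensity_apply _ (hT hs)]
    refine Eq.trans (congrArg μ ?_) (h m n s hs)
    ext ω
    exact ⟨fun h => ⟨h.2.1, h.2.2, h.1⟩, fun h => ⟨h.2.2, h.1, h.2.1⟩⟩
  rw [← lintegral_map hg hT, hmap, lintegral_map hg hT]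
  exact lintegral_withDensity_eq_lintegral_mul _ hd (hg.comp hT)

lemma mul_poissonPdf (m : ℝ) (n : ℕ) :
    m * poissonPdf m n = (n + 1) * poissonPdf m (n + 1) := by
  unfold poissonPdf
  rw [Nat.factorial_succ]
  push_cast
  have : (n.factorial : ℝ) ≠ 0 := by positivity
  have : (n : ℝ) + 1 ≠ 0 := by positivity
  field_simp
  ring

/-- Size biasing by `W = M₂ / b` shifts `Z₂` by one. -/
lemma JointMixedPoisson.lintegral_mul_le {Ω E : Type*} [MeasurableSpace Ω] [MeasurableSpace E]
    {μ : Measure Ω} {Z₁ Z₂ : Ω → ℕ} {T : Ω → E} {M₁ : Ω → ℝ} {w : E → ℝ} {b : ℝ}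
    (h : JointMixedPoisson μ Z₁ Z₂ T M₁ fun ω => b * w (T ω))
    (hZ₁ : Measurable Z₁) (hZ₂ : Measurable Z₂)
    (hT : Measurable T) (hM₁ : Measurable M₁) (hw : Measurable w) (hb : 0 < b)
    (hw0 : ∀ᵐ ω ∂μ, 0 ≤ w (T ω)) (H : ℕ → ℕ → ℝ≥0∞) :
    ∫⁻ ω, ENNReal.ofReal (w (T ω)) * H (Z₁ ω) (Z₂ ω + 1) ∂μ
      ≤ ENNReal.ofReal b⁻¹ * ∫⁻ ω, Z₂ ω * H (Z₁ ω) (Z₂ ω) ∂μ := by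
  have hlev : ∀ p : ℕ × ℕ, MeasurableSet {ω | Z₁ ω = p.1 ∧ Z₂ ω = p.2} := fun p =>
    (hZ₁ (measurableSet_singleton p.1)).inter (hZ₂ (measurableSet_singleton p.2))
  have hsplit : ∀ f : Ω → ℝ≥0∞, ∫⁻ ω, f ω ∂μ
      = ∑' p : ℕ × ℕ, ∫⁻ ω in {ω | Z₁ ω = p.1 ∧ Z₂ ω = p.2}, f ω ∂μ := by
    intro f
    rw [← lintegral_iUnion hlev, show (⋃ p : ℕ × ℕ, {ω | Z₁ ω = p.1 ∧ Z₂ ω = p.2})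
      = Set.univ by ext ω; simp, setLIntegral_univ]
    intro p q hpq
    refine Set.disjoint_left.2 fun ω hp hq => hpq ?_
    exact Prod.ext (hp.1.symm.trans hq.1) (hp.2.symm.trans hq.2)
  have hM₂ : Measurable fun ω => b * w (T ω) := (hw.comp hT).const_mul b
  have hterm : ∀ p : ℕ × ℕ,
      ∫⁻ ω in {ω | Z₁ ω = p.1 ∧ Z₂ ω = p.2}, ENNReal.ofReal (w (T ω)) * H (Z₁ ω) (Z₂ ω + 1) ∂μ
      = ENNReal.ofReal b⁻¹ * ∫⁻ ω in {ω | Z₁ ω = p.1 ∧ Z₂ ω = p.2 + 1},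
          Z₂ ω * H (Z₁ ω) (Z₂ ω) ∂μ := by
    rintro ⟨m, n⟩
    have e1 : ∫⁻ ω in {ω | Z₁ ω = m ∧ Z₂ ω = n},
        ENNReal.ofReal (w (T ω)) * H (Z₁ ω) (Z₂ ω + 1) ∂μ
        = ∫⁻ ω in {ω | Z₁ ω = m ∧ Z₂ ω = n}, ENNReal.ofReal (w (T ω)) * H m (n + 1) ∂μ :=
      setLIntegral_congr_fun (hlev (m, n)) fun ω hω => by
        simp only [hω.1, hω.2]
    have e2 : ∫⁻ ω in {ω | Z₁ ω = m ∧ Z₂ ω = n + 1}, Z₂ ω * H (Z₁ ω) (Z₂ ω) ∂μ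
        = ∫⁻ ω in {ω | Z₁ ω = m ∧ Z₂ ω = n + 1}, ((n + 1 : ℕ) : ℝ≥0∞) * H m (n + 1) ∂μ :=
      setLIntegral_congr_fun (hlev (m, n + 1)) fun ω hω => by
        simp only [hω.1, hω.2]
    have e3 := h.setLIntegral hT hM₁ hM₂ m n
      (g := fun t => ENNReal.ofReal (w t) * H m (n + 1)) (hw.ennreal_ofReal.mul_const _)
    have e4 := h.setLIntegral hT hM₁ hM₂ m (n + 1)
      (g := fun _ => ((n + 1 : ℕ) : ℝ≥0∞) * H m (n + 1)) measurable_const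
    simp only at e1 e2 e3 e4 ⊢
    rw [e1, e2, e3, e4, ← lintegral_const_mul']
    · refine lintegral_congr_ae ?_
      filter_upwards [hw0] with ω hω
      have key : ENNReal.ofReal (poissonPdf (b * w (T ω)) n) * ENNReal.ofReal (w (T ω))
          = ENNReal.ofReal b⁻¹ * (ENNReal.ofReal (poissonPdf (b * w (T ω)) (n + 1))
            * ((n + 1 : ℕ) : ℝ≥0∞)) := by
        have hp := poissonPdf_nonneg (mul_nonneg hb.le hω)
        rw [← ENNReal.ofReal_natCast, ← ENNReal.ofReal_mul (hp _), ← ENNReal.ofReal_mul (hp _),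
          ← ENNReal.ofReal_mul (by positivity)]
        congr 1
        have := mul_poissonPdf (b * w (T ω)) n
        push_cast
        rw [mul_comm (poissonPdf _ (n + 1)), ← this]
        field_simp
      calc _ = ENNReal.ofReal (poissonPdf (M₁ ω) m) * (ENNReal.ofReal (poissonPdf (b * w (T ω)) n)
            * ENNReal.ofReal (w (T ω))) * H m (n + 1) := by ring
        _ = _ := by rw [key]; ring
    · exact ENNReal.ofReal_ne_top
  rw [hsplit, hsplit fun ω => Z₂ ω * H (Z₁ ω) (Z₂ ω), tsum_congr hterm, ENNReal.tsum_mul_left]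
  refine mul_le_mul' le_rfl ?_
  have hinj : Function.Injective fun p : ℕ × ℕ => (p.1, p.2 + 1) := fun p q hpq => by
    simpa [Prod.ext_iff] using hpq
  exact ENNReal.tsum_comp_le_tsum_of_injective hinj fun p : ℕ × ℕ =>
    ∫⁻ ω in {ω | Z₁ ω = p.1 ∧ Z₂ ω = p.2}, Z₂ ω * H (Z₁ ω) (Z₂ ω) ∂μ

/-- If `Z` is conditionally Poisson given `T`, a uniform bound on conditional probabilities on
`{T ∈ S}` gives a bound on the probability of the intersection. -/
lemma mixedPoisson_measure_le {Ω E : Type*} [MeasurableSpace Ω] [MeasurableSpace E]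
    {μ : Measure Ω} {Z : Ω → ℕ} {T : Ω → E} {M : Ω → ℝ}
    (hT : Measurable T) (hM : Measurable M)
    (h : MixedPoisson μ Z T M)
    (A : E → Set ℕ) (hA : ∀ n, MeasurableSet {t | n ∈ A t}) (S : Set E) (hS : MeasurableSet S)
    (δ : ℝ≥0∞) (hδ : ∀ᵐ ω ∂μ, T ω ∈ S →
      ∑' n, ENNReal.ofReal (poissonPdf (M ω) n) * (A (T ω)).indicator 1 n ≤ δ) :
    μ {ω | T ω ∈ S ∧ Z ω ∈ A (T ω)} ≤ δ * μ {ω | T ω ∈ S} := by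
  have hTS : MeasurableSet {ω | T ω ∈ S} := hT hS
  calc μ {ω | T ω ∈ S ∧ Z ω ∈ A (T ω)}
      ≤ μ (⋃ n, {ω | Z ω = n ∧ T ω ∈ S ∩ {t | n ∈ A t}}) := by
        refine measure_mono fun ω hω => ?_
        exact Set.mem_iUnion.2 ⟨Z ω, rfl, hω.1, hω.2⟩
    _ ≤ ∑' n, μ {ω | Z ω = n ∧ T ω ∈ S ∩ {t | n ∈ A t}} := measure_iUnion_le _
    _ = ∑' n, ∫⁻ ω in {ω | T ω ∈ S},
          ENNReal.ofReal (poissonPdf (M ω) n) * (A (T ω)).indicator 1 n ∂μ := by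
        refine tsum_congr fun n => ?_
        have hn : MeasurableSet {ω | n ∈ A (T ω)} := hT (hA n)
        rw [h n _ (hS.inter (hA n)),
          show {ω | T ω ∈ S ∩ {t | n ∈ A t}} = {ω | n ∈ A (T ω)} ∩ {ω | T ω ∈ S} from
            Set.ext fun ω => and_comm,
          ← Measure.restrict_restrict hn, ← lintegral_indicator hn]
        refine lintegral_congr fun ω => ?_
        by_cases hω : n ∈ A (T ω) <;> simp [Set.indicator, hω]
    _ = ∫⁻ ω in {ω | T ω ∈ S},
          ∑' n, ENNReal.ofReal (poissonPdf (M ω) n) * (A (T ω)).indicator 1 n ∂μ := by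
        refine (lintegral_tsum fun n => Measurable.aemeasurable ?_).symm
        refine ((measurable_poissonPdf n).comp hM).ennreal_ofReal.mul ?_
        have hn : MeasurableSet {ω | n ∈ A (T ω)} := hT (hA n)
        exact (measurable_const (a := (1 : ℝ≥0∞))).indicator hn
    _ ≤ ∫⁻ _ in {ω | T ω ∈ S}, δ ∂μ :=
        lintegral_mono_ae ((ae_restrict_iff' hTS).2 hδ)
    _ = δ * μ {ω | T ω ∈ S} := by simp

lemma RVtail.eventually_pos {F : ℝ → ℝ} {α : ℝ} (hF : RVtail F α) (h0 : ∀ x, 0 ≤ F x) :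
    ∀ᶠ x in atTop, 0 < F x := by
  have h := hF 1 one_pos
  filter_upwards [h.eventually (lt_mem_nhds (a := 0) (by positivity))] with x hx
  refine (h0 x).lt_of_ne fun h => ?_
  simp [← h] at hx

lemma RVtail.eventually_le_of_lt {F : ℝ → ℝ} {α lam q : ℝ} (hF : RVtail F α)
    (h0 : ∀ x, 0 ≤ F x) (hlam : 0 < lam) (hq : lam ^ (-α) < q) :
    ∀ᶠ x in atTop, F (lam * x) ≤ q * F x := by
  filter_upwards [hF.eventually_pos h0, (hF lam hlam).eventually (gt_mem_nhds hq)] with x hx h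
  exact ((div_lt_iff₀ hx).1 h).le

lemma RVtail.exists_eventually_le {F : ℝ → ℝ} {α lam : ℝ} (hF : RVtail F α)
    (h0 : ∀ x, 0 ≤ F x) (hlam : 0 < lam) :
    ∃ K, 0 < K ∧ ∀ᶠ x in atTop, F (lam * x) ≤ K * F x :=
  ⟨lam ^ (-α) + 1, by positivity, hF.eventually_le_of_lt h0 hlam (by linarith)⟩

lemma RVtail.exists_eventually_ge {F : ℝ → ℝ} {α lam : ℝ} (hF : RVtail F α)
    (h0 : ∀ x, 0 ≤ F x) (hlam : 0 < lam) :
    ∃ K, 0 < K ∧ ∀ᶠ x in atTop, F x ≤ K * F (lam * x) := by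
  obtain ⟨K, hK, h⟩ := hF.exists_eventually_le h0 (inv_pos.2 hlam)
  refine ⟨K, hK, ?_⟩
  filter_upwards [(tendsto_id.const_mul_atTop hlam).eventually h] with x hx
  simpa [hlam.ne'] using hx

/-- Geometric decay of a regularly varying tail of index below `-1` along powers of two. -/
lemma RVtail.exists_geometric_decay {F : ℝ → ℝ} {α : ℝ} (hF : RVtail F α)
    (h0 : ∀ x, 0 ≤ F x) (hα : 1 < α) :
    ∃ q, 0 < q ∧ q < 1 / 2 ∧ ∀ᶠ x in atTop, ∀ j : ℕ, F (2 ^ j * x) ≤ q ^ j * F x := by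
  have h2 : (2 : ℝ) ^ (-α) < 1 / 2 := by
    have := Real.rpow_lt_rpow_of_exponent_lt (x := 2) one_lt_two (neg_lt_neg hα)
    rw [Real.rpow_neg_one] at this
    linarith
  obtain ⟨q, hq1, hq2⟩ := exists_between h2
  have hq0 : 0 < q := lt_trans (by positivity) hq1
  refine ⟨q, hq0, hq2, ?_⟩
  obtain ⟨x₀, hx₀⟩ := eventually_atTop.1 (hF.eventually_le_of_lt h0 two_pos hq1)
  filter_upwards [eventually_ge_atTop x₀, eventually_ge_atTop 0] with x hx hx' j
  induction j with
  | zero => simp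
  | succ j ih =>
    have h1 : x ≤ 2 ^ j * x := le_mul_of_one_le_left hx' (one_le_pow₀ one_le_two)
    calc F (2 ^ (j + 1) * x) = F (2 * (2 ^ j * x)) := by ring_nf
      _ ≤ q * F (2 ^ j * x) := hx₀ _ (hx.trans h1)
      _ ≤ q * (q ^ j * F x) := by gcongr
      _ = q ^ (j + 1) * F x := by ring

/-- A regularly varying tail decays at most polynomially. -/
lemma RVtail.exists_pow_lower_bound {F : ℝ → ℝ} {α : ℝ} (hF : RVtail F α)
    (h0 : ∀ x, 0 ≤ F x) (hanti : Antitone F) :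
    ∃ (p : ℕ) (C : ℝ), 0 < C ∧ ∀ᶠ x in atTop, C ≤ F x * x ^ p := by
  obtain ⟨K, hK, hdoub⟩ := hF.exists_eventually_ge h0 two_pos
  obtain ⟨p, hp⟩ := pow_unbounded_of_one_lt K one_lt_two
  obtain ⟨x₀, hx₀⟩ := eventually_atTop.1
    (hdoub.and ((hF.eventually_pos h0).and (eventually_gt_atTop 0)))
  have hx₀0 : 0 < x₀ := (hx₀ x₀ le_rfl).2.2
  have hpos : 0 < F (2 * x₀) := (hx₀ (2 * x₀) (by linarith)).2.1
  refine ⟨p, F (2 * x₀) * x₀ ^ p, by positivity, ?_⟩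
  have key : ∀ n : ℕ, ∀ x, x₀ ≤ x → x ≤ 2 ^ (n + 1) * x₀ →
      F (2 * x₀) * x₀ ^ p ≤ F x * x ^ p := by
    intro n
    induction n with
    | zero =>
      intro x h1 h2
      have := hanti (show x ≤ 2 * x₀ by simpa using h2)
      have := h0 x
      gcongr
    | succ n ih =>
      intro x h1 h2
      by_cases hx : x ≤ 2 * x₀
      · have := hanti hx
        have := h0 x
        gcongr
      · have hy1 : x₀ ≤ x / 2 := by linarith
        have hy2 : x / 2 ≤ 2 ^ (n + 1) * x₀ := by rw [pow_succ] at h2; linarith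
        refine (ih _ hy1 hy2).trans ?_
        have h3 := (hx₀ _ hy1).1
        rw [mul_div_cancel₀ _ (two_ne_zero' ℝ)] at h3
        have hx0 : 0 ≤ x := by linarith
        calc F (x / 2) * (x / 2) ^ p ≤ (K * F x) * (x / 2) ^ p := by gcongr
          _ ≤ (2 ^ p * F x) * (x / 2) ^ p := by
            have := h0 x
            gcongr
          _ = F x * x ^ p := by rw [div_pow]; field_simp
  filter_upwards [eventually_ge_atTop x₀] with x hx
  obtain ⟨n, hn⟩ := pow_unbounded_of_one_lt (x / x₀) one_lt_two
  refine key n x hx ?_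
  have := (div_lt_iff₀ hx₀0).1 hn
  rw [pow_succ]
  nlinarith [show 0 ≤ (2 : ℝ) ^ n * x₀ by positivity]

lemma RVtail.eventually_exp_le {F : ℝ → ℝ} {α ε : ℝ} (hF : RVtail F α)
    (h0 : ∀ x, 0 ≤ F x) (hanti : Antitone F) (hε : 0 < ε) :
    ∀ᶠ x in atTop, Real.exp (-(x / 2)) ≤ ε * F x := by
  obtain ⟨p, C, hC, h⟩ := hF.exists_pow_lower_bound h0 hanti
  have hlim : Tendsto (fun x : ℝ => x ^ p * Real.exp (-(1 / 2) * x)) atTop (nhds 0) := by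
    have := tendsto_rpow_mul_exp_neg_mul_atTop_nhds_zero p (1 / 2) (by norm_num)
    simpa using this
  filter_upwards [h, hlim.eventually (gt_mem_nhds (show 0 < ε * C by positivity)),
    eventually_gt_atTop 0] with x h1 h2 hx
  rw [show -(1 / 2) * x = -(x / 2) by ring] at h2
  have h3 : x ^ p * Real.exp (-(x / 2)) ≤ x ^ p * (ε * F x) := by nlinarith
  exact le_of_mul_le_mul_left h3 (by positivity)

lemma tailP_nonneg {Ω : Type*} [MeasurableSpace Ω] (μ : Measure Ω) (X : Ω → ℝ) (x : ℝ) :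
    0 ≤ tailP μ X x := ENNReal.toReal_nonneg

lemma tailP_antitone {Ω : Type*} [MeasurableSpace Ω] (μ : Measure Ω) [IsFiniteMeasure μ]
    (X : Ω → ℝ) : Antitone (tailP μ X) := fun _ _ h =>
  measureReal_mono (μ := μ) fun _ hω => lt_of_le_of_lt h hω

lemma MixedPoisson.measureReal_upper_le {Ω E : Type*} [MeasurableSpace Ω] [MeasurableSpace E]
    {μ : Measure Ω} [IsFiniteMeasure μ] {Z : Ω → ℕ} {T : Ω → E} {a : ℝ} {w : E → ℝ}
    (h : MixedPoisson μ Z T fun ω => a * w (T ω)) (hT : Measurable T) (hw : Measurable w)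
    (ha : 0 < a) (hw0 : ∀ᵐ ω ∂μ, 0 ≤ w (T ω)) {S : Set E} (hS : MeasurableSet S) {u : E → ℝ}
    (hu : Measurable u) {δ : ℝ} (hδ0 : 0 ≤ δ)
    (hδ : ∀ t ∈ S, 0 ≤ w t → Real.exp (2 * (a * w t) - u t) ≤ δ) :
    μ.real {ω | T ω ∈ S ∧ u (T ω) < Z ω} ≤ δ * μ.real {ω | T ω ∈ S} := by
  have key := mixedPoisson_measure_le hT ((hw.comp hT).const_mul a) h
    (fun t => {n : ℕ | u t < n}) (fun n => measurableSet_lt hu measurable_const) S hS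
    (ENNReal.ofReal δ) (by
      filter_upwards [hw0] with ω hω hωS
      exact (poisson_upper_tail (mul_nonneg ha.le hω)).trans
        (ENNReal.ofReal_le_ofReal (hδ _ hωS hω)))
  have := ENNReal.toReal_mono (ENNReal.mul_ne_top ENNReal.ofReal_ne_top (measure_ne_top _ _)) key
  rwa [ENNReal.toReal_mul, ENNReal.toReal_ofReal hδ0] at this

lemma MixedPoisson.measureReal_lower_le {Ω E : Type*} [MeasurableSpace Ω] [MeasurableSpace E]
    {μ : Measure Ω} [IsFiniteMeasure μ] {Z : Ω → ℕ} {T : Ω → E} {a : ℝ} {w : E → ℝ}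
    (h : MixedPoisson μ Z T fun ω => a * w (T ω)) (hT : Measurable T) (hw : Measurable w)
    {S : Set E} (hS : MeasurableSet S) {u : E → ℝ}
    (hu : Measurable u) {y : ℝ} (hy : 0 < y)
    (hSy : ∀ t ∈ S, y ≤ a * w t ∧ u t ≤ a * w t / 4) :
    μ.real {ω | T ω ∈ S ∧ (Z ω : ℝ) ≤ u (T ω)} ≤ 4 / y * μ.real {ω | T ω ∈ S} := by
  have key := mixedPoisson_measure_le hT ((hw.comp hT).const_mul a) h
    (fun t => {n : ℕ | (n : ℝ) ≤ u t}) (fun n => measurableSet_le measurable_const hu) S hS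
    (ENNReal.ofReal (4 / y)) (by
      refine Eventually.of_forall fun ω hωS => ?_
      obtain ⟨h1, h2⟩ := hSy _ hωS
      refine (poisson_lower_tail (hy.trans_le h1) h2).trans (ENNReal.ofReal_le_ofReal ?_)
      gcongr)
  have := ENNReal.toReal_mono (ENNReal.mul_ne_top ENNReal.ofReal_ne_top (measure_ne_top _ _)) key
  rwa [ENNReal.toReal_mul, ENNReal.toReal_ofReal (by positivity)] at this

lemma MixedPoisson.measureReal_small_mean_le {Ω E : Type*} [MeasurableSpace Ω]
    [MeasurableSpace E] {μ : Measure Ω} [IsProbabilityMeasure μ] {Z : Ω → ℕ} {T : Ω → E} {a : ℝ}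
    {w : E → ℝ} (h : MixedPoisson μ Z T fun ω => a * w (T ω)) (hT : Measurable T)
    (hw : Measurable w) (ha : 0 < a) (hw0 : ∀ᵐ ω ∂μ, 0 ≤ w (T ω)) (x : ℝ) :
    μ.real {ω | w (T ω) ≤ (4 * a)⁻¹ * x ∧ x < Z ω} ≤ Real.exp (-(x / 2)) := by
  have := h.measureReal_upper_le hT hw ha hw0 (S := {t | w t ≤ (4 * a)⁻¹ * x})
    (measurableSet_le hw measurable_const) (u := fun _ => x) measurable_const
    (δ := Real.exp (-(x / 2))) (by positivity) (by
      intro t ht _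
      have ht : w t ≤ (4 * a)⁻¹ * x := ht
      refine Real.exp_le_exp.2 ?_
      have : a * w t ≤ a * ((4 * a)⁻¹ * x) := by gcongr
      have e : a * ((4 * a)⁻¹ * x) = x / 4 := by field_simp
      linarith)
  refine this.trans (mul_le_of_le_one_right (by positivity) measureReal_le_one)

/-- The tail of a mixed Poisson variable is at most of the order of that of its mean. -/
lemma MixedPoisson.exists_tailP_le {Ω E : Type*} [MeasurableSpace Ω]
    [MeasurableSpace E] {μ : Measure Ω} [IsProbabilityMeasure μ] {Z : Ω → ℕ} {T : Ω → E} {a : ℝ}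
    {w : E → ℝ} (h : MixedPoisson μ Z T fun ω => a * w (T ω)) (hT : Measurable T)
    (hw : Measurable w) (ha : 0 < a) (hw0 : ∀ᵐ ω ∂μ, 0 ≤ w (T ω)) {α : ℝ}
    (hRV : RVtail (tailP μ fun ω => w (T ω)) α) :
    ∃ K, 0 < K ∧ ∀ᶠ x in atTop,
      tailP μ (fun ω => (Z ω : ℝ)) x ≤ K * tailP μ (fun ω => w (T ω)) x := by
  have h0 := tailP_nonneg μ fun ω => w (T ω)
  obtain ⟨K, hK, hKle⟩ := hRV.exists_eventually_le h0 (lam := (4 * a)⁻¹) (by positivity)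
  refine ⟨1 + K, by positivity, ?_⟩
  filter_upwards [hKle, hRV.eventually_exp_le h0 (tailP_antitone μ _) one_pos] with x h1 h2
  have h3 := h.measureReal_small_mean_le hT hw ha hw0 x
  have h4 : tailP μ (fun ω => (Z ω : ℝ)) x
      ≤ μ.real {ω | w (T ω) ≤ (4 * a)⁻¹ * x ∧ x < Z ω}
        + tailP μ (fun ω => w (T ω)) ((4 * a)⁻¹ * x) := by
    refine (measureReal_mono (μ := μ) fun ω hω => ?_).trans (measureReal_union_le _ _)
    by_cases hc : w (T ω) ≤ (4 * a)⁻¹ * x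
    · exact Or.inl ⟨hc, hω⟩
    · exact Or.inr (not_le.1 hc)
  linarith

/-- The tail of a mixed Poisson variable is at least of the order of that of its mean. -/
lemma MixedPoisson.exists_le_tailP {Ω E : Type*} [MeasurableSpace Ω]
    [MeasurableSpace E] {μ : Measure Ω} [IsProbabilityMeasure μ] {Z : Ω → ℕ} {T : Ω → E} {a : ℝ}
    {w : E → ℝ} (h : MixedPoisson μ Z T fun ω => a * w (T ω)) (hT : Measurable T)
    (hw : Measurable w) (ha : 0 < a) {α : ℝ}
    (hRV : RVtail (tailP μ fun ω => w (T ω)) α) :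
    ∃ K, 0 < K ∧ ∀ᶠ x in atTop,
      tailP μ (fun ω => w (T ω)) x ≤ K * tailP μ (fun ω => (Z ω : ℝ)) x := by
  have h0 := tailP_nonneg μ fun ω => w (T ω)
  obtain ⟨K, hK, hKle⟩ := hRV.exists_eventually_ge h0 (lam := 4 / a) (by positivity)
  refine ⟨K * 2, by positivity, ?_⟩
  filter_upwards [hKle, eventually_ge_atTop 2] with x h1 hx
  have h3 := h.measureReal_lower_le hT hw (S := {t | 4 / a * x < w t})
    (measurableSet_lt measurable_const hw) (u := fun _ => x) measurable_const
    (y := 4 * x) (by positivity) (by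
      intro t ht
      have ht : 4 / a * x < w t := ht
      have : a * (4 / a * x) ≤ a * w t := by gcongr
      have e : a * (4 / a * x) = 4 * x := by field_simp
      constructor <;> linarith)
  have h4 : tailP μ (fun ω => w (T ω)) (4 / a * x)
      ≤ μ.real {ω | T ω ∈ {t | 4 / a * x < w t} ∧ (Z ω : ℝ) ≤ x}
        + tailP μ (fun ω => (Z ω : ℝ)) x := by
    refine (measureReal_mono (μ := μ) fun ω hω => ?_).trans (measureReal_union_le _ _)
    by_cases hc : (Z ω : ℝ) ≤ x
    · exact Or.inl ⟨hω, hc⟩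
    · exact Or.inr (not_le.1 hc)
  have h5 : 4 / (4 * x) ≤ 1 / 2 := by
    rw [div_le_div_iff₀ (by positivity) two_pos]; linarith
  have h6 : 4 / (4 * x) * tailP μ (fun ω => w (T ω)) (4 / a * x)
      ≤ 1 / 2 * tailP μ (fun ω => w (T ω)) (4 / a * x) :=
    mul_le_mul_of_nonneg_right h5 (h0 _)
  have h7 : tailP μ (fun ω => w (T ω)) (4 / a * x) ≤ 2 * tailP μ (fun ω => (Z ω : ℝ)) x := by
    have h3' : μ.real {ω | T ω ∈ {t | 4 / a * x < w t} ∧ (Z ω : ℝ) ≤ x}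
      ≤ 4 / (4 * x) * tailP μ (fun ω => w (T ω)) (4 / a * x) := h3
    linarith
  calc _ ≤ _ := h1
    _ ≤ K * (2 * tailP μ (fun ω => (Z ω : ℝ)) x) := by gcongr
    _ = _ := by ring

/-- The event that `Z₁ / Z₂` is large is negligible with respect to the tail of `w₁`. -/
lemma eventually_ratio_event_le {Ω E : Type*} [MeasurableSpace Ω]
    [MeasurableSpace E] {μ : Measure Ω} [IsProbabilityMeasure μ] {Z₁ Z₂ : Ω → ℕ} {T : Ω → E}
    {a b : ℝ} {w₁ w₂ : E → ℝ} (h₁ : MixedPoisson μ Z₁ T fun ω => a * w₁ (T ω))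
    (h₂ : MixedPoisson μ Z₂ T fun ω => b * w₂ (T ω)) (hT : Measurable T)
    (hw₁ : Measurable w₁) (hw₂ : Measurable w₂) (ha : 0 < a) (hb : 0 < b)
    (hw₁0 : ∀ᵐ ω ∂μ, 0 ≤ w₁ (T ω)) {α : ℝ}
    (hRV : RVtail (tailP μ fun ω => w₁ (T ω)) α)
    (ho : (fun x => tailP μ (fun ω => w₁ (T ω) / max (w₂ (T ω)) 1) x)
      =o[atTop] fun x => tailP μ (fun ω => w₁ (T ω)) x) {ε : ℝ} (hε : 0 < ε) :
    ∀ᶠ x : ℝ in atTop, μ.real {ω | 1 ≤ Z₂ ω ∧ x * Z₂ ω < Z₁ ω}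
      ≤ ε * tailP μ (fun ω => w₁ (T ω)) x := by
  set F := tailP μ fun ω => w₁ (T ω) with hF
  have h0 : ∀ x, 0 ≤ F x := tailP_nonneg μ _
  obtain ⟨c, hc⟩ : ∃ c, c = (4 * a)⁻¹ := ⟨_, rfl⟩
  have hc0 : 0 < c := hc ▸ by positivity
  obtain ⟨K, hK, hKle⟩ := hRV.exists_eventually_le h0 hc0
  obtain ⟨lam, hlam0, hlam1, hlam2, hlam3⟩ : ∃ lam : ℝ, 0 < lam ∧ lam ≤ c / 2 ∧
      lam ≤ b / (16 * a) ∧ (8 / b + 4 / (b * c)) * K * lam ≤ ε / 2 := by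
    refine ⟨min (min (c / 2) (b / (16 * a))) (ε / 2 / ((8 / b + 4 / (b * c)) * K)),
      by positivity, (min_le_left _ _).trans (min_le_left _ _),
      (min_le_left _ _).trans (min_le_right _ _), ?_⟩
    rw [mul_comm, ← le_div_iff₀ (by positivity)]
    exact min_le_right _ _
  obtain ⟨L, hL, hLle⟩ := hRV.exists_eventually_le h0 hlam0
  have ho' := (tendsto_id.const_mul_atTop hlam0).eventually
    (ho.bound (show 0 < ε / 4 / L by positivity))
  filter_upwards [hKle, hLle, ho', hRV.eventually_exp_le h0 (tailP_antitone μ _)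
    (show 0 < ε / 4 by positivity), eventually_ge_atTop c⁻¹] with x hxK hxL hxo hxe hxc
  have hx0 : 0 < x := lt_of_lt_of_le (by positivity) hxc
  have hcx : 1 ≤ c * x := by
    have := mul_le_mul_of_nonneg_left hxc hc0.le
    rwa [mul_inv_cancel₀ hc0.ne'] at this
  have hsmall := h₁.measureReal_small_mean_le hT hw₁ ha hw₁0 x
  rw [← hc] at hsmall
  have hratio : tailP μ (fun ω => w₁ (T ω) / max (w₂ (T ω)) 1) (lam * x) ≤ ε / 4 * F x := by
    rw [id, Real.norm_of_nonneg (tailP_nonneg _ _ _), Real.norm_of_nonneg (h0 _)] at hxo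
    calc _ ≤ _ := hxo
      _ ≤ ε / 4 / L * (L * F x) := by gcongr
      _ = ε / 4 * F x := by field_simp
  have hup := h₁.measureReal_upper_le hT hw₁ ha hw₁0 (S := {t | c * x < w₁ t})
    (measurableSet_lt measurable_const hw₁) (u := fun t => b / (4 * lam) * w₁ t)
    (hw₁.const_mul _) (δ := 8 * lam / b) (by positivity) (by
      intro t ht _
      have ht : c * x < w₁ t := ht
      have hβ : 4 * a ≤ b / (4 * lam) := by
        rw [le_div_iff₀ (by positivity)] at hlam2 ⊢
        linarith
      have h1 : 2 * (a * w₁ t) - b / (4 * lam) * w₁ t ≤ -(b / (8 * lam)) := by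
        have e : b / (8 * lam) = b / (4 * lam) / 2 := by field_simp; norm_num
        rw [e]
        nlinarith
      refine (Real.exp_le_exp.2 h1).trans ?_
      rw [Real.exp_neg, inv_le_comm₀ (by positivity) (by positivity), inv_div]
      linarith [Real.add_one_le_exp (b / (8 * lam))])
  have hlow := h₂.measureReal_lower_le hT hw₂ (S := {t | c * x < w₁ t ∧ c / lam ≤ w₂ t})
    ((measurableSet_lt measurable_const hw₁).inter (measurableSet_le measurable_const hw₂))
    (u := fun t => b * w₂ t / 4) ((hw₂.const_mul b).div_const 4)
    (y := b * (c / lam)) (by positivity) (by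
      intro t ht
      have : c / lam ≤ w₂ t := ht.2
      exact ⟨by gcongr, le_rfl⟩)
  have hlow' : μ.real {ω | T ω ∈ {t | c * x < w₁ t ∧ c / lam ≤ w₂ t}} ≤ F (c * x) :=
    measureReal_mono (μ := μ) fun ω hω => hω.1
  have hcover : {ω | 1 ≤ Z₂ ω ∧ x * Z₂ ω < Z₁ ω} ⊆
      (({ω | w₁ (T ω) ≤ c * x ∧ x < Z₁ ω}
        ∪ {ω | w₁ (T ω) / max (w₂ (T ω)) 1 > lam * x})
        ∪ {ω | T ω ∈ {t | c * x < w₁ t} ∧ b / (4 * lam) * w₁ (T ω) < Z₁ ω})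
        ∪ {ω | T ω ∈ {t | c * x < w₁ t ∧ c / lam ≤ w₂ t} ∧ (Z₂ ω : ℝ) ≤ b * w₂ (T ω) / 4} := by
    rintro ω ⟨hω1, hω2⟩
    have hZ : (1 : ℝ) ≤ Z₂ ω := by exact_mod_cast hω1
    by_cases hA : w₁ (T ω) ≤ c * x
    · exact Or.inl (Or.inl (Or.inl ⟨hA, by nlinarith⟩))
    by_cases hB : w₁ (T ω) / max (w₂ (T ω)) 1 > lam * x
    · exact Or.inl (Or.inl (Or.inr hB))
    have hA' := not_le.1 hA
    have hm0 : 0 < max (w₂ (T ω)) 1 := lt_max_of_lt_right one_pos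
    have hB' := (div_le_iff₀ hm0).1 (not_lt.1 hB)
    have hmax : c / lam ≤ max (w₂ (T ω)) 1 := by
      rw [div_le_iff₀ hlam0]
      nlinarith
    have h2 : 2 ≤ c / lam := by
      rw [le_div_iff₀ hlam0]; linarith
    have hw : max (w₂ (T ω)) 1 = w₂ (T ω) := by
      refine max_eq_left (le_of_not_gt fun hlt => ?_)
      rw [max_eq_right hlt.le] at hmax
      linarith
    rw [hw] at hmax hB'
    by_cases hC : (Z₂ ω : ℝ) ≤ b * w₂ (T ω) / 4
    · exact Or.inr ⟨⟨hA', hmax⟩, hC⟩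
    · refine Or.inl (Or.inr ⟨hA', ?_⟩)
      have hC' := not_le.1 hC
      calc b / (4 * lam) * w₁ (T ω) ≤ b / (4 * lam) * (lam * x * w₂ (T ω)) := by gcongr
        _ = x * (b * w₂ (T ω) / 4) := by field_simp
        _ ≤ x * Z₂ ω := by gcongr
        _ < Z₁ ω := hω2
  have hsum := (measureReal_mono (μ := μ) hcover).trans ((measureReal_union_le _ _).trans
    (add_le_add_left ((measureReal_union_le _ _).trans
      (add_le_add_left (measureReal_union_le _ _) _)) _))
  have hup' : μ.real {ω | T ω ∈ {t | c * x < w₁ t} ∧ b / (4 * lam) * w₁ (T ω) < Z₁ ω}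
      ≤ 8 * lam / b * F (c * x) := hup
  have hlow'' : μ.real {ω | T ω ∈ {t | c * x < w₁ t ∧ c / lam ≤ w₂ t}
      ∧ (Z₂ ω : ℝ) ≤ b * w₂ (T ω) / 4} ≤ 4 / (b * (c / lam)) * F (c * x) :=
    hlow.trans (by gcongr)
  have hmain : 8 * lam / b * F (c * x) + 4 / (b * (c / lam)) * F (c * x) ≤ ε / 2 * F x := by
    calc _ = (8 / b + 4 / (b * c)) * lam * F (c * x) := by field_simp
      _ ≤ (8 / b + 4 / (b * c)) * lam * (K * F x) := by gcongr
      _ = (8 / b + 4 / (b * c)) * K * lam * F x := by ring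
      _ ≤ ε / 2 * F x := mul_le_mul_of_nonneg_right hlam3 (h0 x)
  have hratio' : μ.real {ω | w₁ (T ω) / max (w₂ (T ω)) 1 > lam * x} ≤ ε / 4 * F x := hratio
  linarith

lemma natCast_mul_indicator_le (m n J : ℕ) {x : ℝ} (hx : 0 < x) :
    (n : ℝ≥0∞) * (if x * n < m then 1 else 0)
      ≤ 2 ^ J * (if 1 ≤ n ∧ x * n < m then 1 else 0)
        + ∑' i : ℕ, 2 ^ (J + i + 1) * (if 2 ^ (J + i) * x < m then 1 else 0) := by
  by_cases h : x * n < m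
  · by_cases hn : n = 0
    · simp [hn]
    by_cases hJ : n ≤ 2 ^ J
    · refine le_trans ?_ le_self_add
      simp only [h, Nat.one_le_iff_ne_zero.2 hn, and_self, if_true, mul_one]
      exact_mod_cast hJ
    · refine le_trans ?_ le_add_self
      have hlog : J ≤ Nat.log 2 n := Nat.le_log_of_pow_le one_lt_two (not_le.1 hJ).le
      obtain ⟨i, hi⟩ := Nat.exists_eq_add_of_le hlog
      refine le_trans ?_ (ENNReal.le_tsum i)
      have h1 : 2 ^ (J + i) ≤ n := hi ▸ Nat.pow_log_le_self 2 hn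
      have h2 : n < 2 ^ (J + i + 1) := hi ▸ Nat.lt_pow_succ_log_self one_lt_two n
      have h3 : 2 ^ (J + i) * x < m := by
        have : (2 : ℝ) ^ (J + i) ≤ n := by exact_mod_cast h1
        nlinarith
      simp only [h, h3, if_true, mul_one]
      exact_mod_cast h2.le
  · simp [h]

/-- Bound on the truncated expectation `E[Z₂; Z₁ > x Z₂]`. -/
lemma eventually_lintegral_ratio_le {Ω : Type*} [MeasurableSpace Ω] {μ : Measure Ω}
    [IsProbabilityMeasure μ] {Z₁ Z₂ : Ω → ℕ} (hZ₁ : Measurable Z₁) (hZ₂ : Measurable Z₂)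
    {F : ℝ → ℝ} (h0 : ∀ x, 0 ≤ F x) {α : ℝ} (hα : 1 < α) (hRV : RVtail F α)
    {K : ℝ} (hK : 0 < K) (hKle : ∀ᶠ x in atTop, tailP μ (fun ω => (Z₁ ω : ℝ)) x ≤ K * F x)
    (hevent : ∀ ε > 0, ∀ᶠ x : ℝ in atTop,
      μ.real {ω | 1 ≤ Z₂ ω ∧ x * Z₂ ω < Z₁ ω} ≤ ε * F x) {ε : ℝ} (hε : 0 < ε) :
    ∀ᶠ x : ℝ in atTop, ∫⁻ ω, (Z₂ ω : ℝ≥0∞) * (if x * Z₂ ω < Z₁ ω then 1 else 0) ∂μ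
      ≤ ENNReal.ofReal (ε * F x) := by
  obtain ⟨q, hq0, hq1, hq⟩ := hRV.exists_geometric_decay h0 hα
  have hsum : HasSum (fun i : ℕ => (2 * q) ^ i) (1 - 2 * q)⁻¹ :=
    hasSum_geometric_of_lt_one (by positivity) (by linarith)
  have hpos : 0 < (1 - 2 * q)⁻¹ := inv_pos.2 (by linarith)
  obtain ⟨J, hJ⟩ := exists_pow_lt_of_lt_one
    (show 0 < ε / 2 / (2 * K * (1 - 2 * q)⁻¹) by positivity) (show 2 * q < 1 by linarith)
  rw [lt_div_iff₀ (by positivity)] at hJ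
  obtain ⟨x₀, hx₀⟩ := eventually_atTop.1 hKle
  filter_upwards [hq, hevent (ε / 2 / 2 ^ J) (by positivity), eventually_ge_atTop x₀,
    eventually_gt_atTop 0] with x hxq hxe hxx₀ hx
  have hreal : ∀ A : Set Ω, ∀ r : ℝ, μ.real A ≤ r → μ A ≤ ENNReal.ofReal r := fun A r h =>
    ENNReal.le_ofReal_iff_toReal_le (measure_ne_top _ _)
      (measureReal_nonneg.trans h) |>.2 h
  have hms : ∀ s : Set (ℕ × ℕ), MeasurableSet {ω | (Z₁ ω, Z₂ ω) ∈ s} := fun s =>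
    (hZ₁.prodMk hZ₂) (MeasurableSet.of_discrete (s := s))
  have hA : MeasurableSet {ω | 1 ≤ Z₂ ω ∧ x * Z₂ ω < Z₁ ω} :=
    hms {p | 1 ≤ p.2 ∧ x * p.2 < p.1}
  have hB : ∀ y : ℝ, MeasurableSet {ω | y < Z₁ ω} := fun y => hms {p | y < p.1}
  have hind : ∀ (p : Ω → Prop) [DecidablePred p], MeasurableSet {ω | p ω} →
      ∀ c : ℝ≥0∞, Measurable (fun ω => c * (if p ω then 1 else 0)) ∧
        ∫⁻ ω, c * (if p ω then 1 else 0) ∂μ = c * μ {ω | p ω} := by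
    intro p _ hp c
    have hm : Measurable fun ω => (if p ω then 1 else 0 : ℝ≥0∞) :=
      Measurable.ite hp measurable_const measurable_const
    refine ⟨hm.const_mul c, ?_⟩
    rw [lintegral_const_mul _ hm, ← lintegral_indicator_one hp]
    refine congrArg _ (lintegral_congr fun ω => ?_)
    by_cases hω : p ω <;> simp [Set.indicator, hω]
  calc ∫⁻ ω, (Z₂ ω : ℝ≥0∞) * (if x * Z₂ ω < Z₁ ω then 1 else 0) ∂μ
      ≤ ∫⁻ ω, (2 ^ J * (if 1 ≤ Z₂ ω ∧ x * Z₂ ω < Z₁ ω then 1 else 0)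
        + ∑' i : ℕ, 2 ^ (J + i + 1) * (if 2 ^ (J + i) * x < Z₁ ω then 1 else 0)) ∂μ :=
        lintegral_mono fun ω => natCast_mul_indicator_le (Z₁ ω) (Z₂ ω) J hx
    _ = 2 ^ J * μ {ω | 1 ≤ Z₂ ω ∧ x * Z₂ ω < Z₁ ω}
        + ∑' i : ℕ, 2 ^ (J + i + 1) * μ {ω | 2 ^ (J + i) * x < Z₁ ω} := by
        rw [lintegral_add_left (hind _ hA _).1, (hind _ hA _).2,
          lintegral_tsum fun i => (hind _ (hB _) _).1.aemeasurable]
        congr 1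
        exact tsum_congr fun i => (hind _ (hB _) _).2
    _ ≤ ENNReal.ofReal (ε / 2 * F x)
        + ∑' i : ℕ, ENNReal.ofReal ((2 * q) ^ J * (2 * K) * F x * (2 * q) ^ i) := by
        have h2 : ∀ k : ℕ, (2 : ℝ≥0∞) ^ k = ENNReal.ofReal (2 ^ k) := fun k => by
          rw [ENNReal.ofReal_pow two_pos.le, ENNReal.ofReal_ofNat]
        refine add_le_add ?_ (ENNReal.tsum_le_tsum fun i => ?_)
        · rw [h2]
          refine (mul_le_mul' le_rfl (hreal _ _ hxe)).trans_eq ?_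
          rw [← ENNReal.ofReal_mul (by positivity)]
          congr 1
          field_simp
        · have h3 : x ≤ 2 ^ (J + i) * x := le_mul_of_one_le_left hx.le (one_le_pow₀ one_le_two)
          have h4 : μ.real {ω | 2 ^ (J + i) * x < Z₁ ω} ≤ K * (q ^ (J + i) * F x) :=
            (hx₀ _ (hxx₀.trans h3)).trans (by gcongr; exact hxq _)
          rw [h2]
          refine (mul_le_mul' le_rfl (hreal _ _ h4)).trans_eq ?_
          rw [← ENNReal.ofReal_mul (by positivity)]
          congr 1
          rw [mul_pow, mul_pow]
          ring
    _ = ENNReal.ofReal (ε / 2 * F x + (2 * q) ^ J * (2 * K) * F x * (1 - 2 * q)⁻¹) := by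
        have hs := hsum.mul_left ((2 * q) ^ J * (2 * K) * F x)
        have hx0 := h0 x
        rw [← ENNReal.ofReal_tsum_of_nonneg (fun i => by positivity) hs.summable, hs.tsum_eq,
          ENNReal.ofReal_add (by positivity) (by positivity)]
    _ ≤ ENNReal.ofReal (ε * F x) := by
        refine ENNReal.ofReal_le_ofReal ?_
        have := mul_le_mul_of_nonneg_right hJ.le (h0 x)
        linarith

/-- Example 4.4 of the paper, IRD case: for the inhomogeneous random
digraph with mixed Poisson degrees `Z⁻, Z⁺` (conditionally independent Poisson with means
`E[W⁺]W⁻/θ` and `E[W⁻]W⁺/θ` given `(W⁻, W⁺, ζ)`), if `P(W⁻ > x) ∈ RV(−α)` and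
`P(W⁻/(W⁺ ∨ 1) > x) = o(P(W⁻ > x))`, then
`E[1(ζ Z⁻/(Z⁺+1) > x) W⁺] = o(E[W⁺] P(Z⁻ > x))`, i.e. `P(𝒞𝒩 > x) = o(P(𝒩₀ > x))`. -/
theorem ird_size_biased_NC_negligible
    {Ω : Type*} [MeasurableSpace Ω] (μ : Measure Ω) [IsProbabilityMeasure μ]
    (Wm Wp ζ : Ω → ℝ) (Zm Zp : Ω → ℕ)
    (hWm : Measurable Wm) (hWp : Measurable Wp) (hζ : Measurable ζ)
    (hZm : Measurable Zm) (hZp : Measurable Zp)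
    (hWm0 : ∀ᵐ ω ∂μ, 0 ≤ Wm ω) (hWp0 : ∀ᵐ ω ∂μ, 0 ≤ Wp ω)
    (hζbd : ∀ᵐ ω ∂μ, |ζ ω| ≤ 1)
    (hWmInt : Integrable Wm μ) (hWpInt : Integrable Wp μ)
    (hWmPos : 0 < ∫ ω, Wm ω ∂μ) (hWpPos : 0 < ∫ ω, Wp ω ∂μ)
    (θ : ℝ) (hθ : θ = ∫ ω, (Wm ω + Wp ω) ∂μ)
    -- `Z⁻` and `Z⁺` are conditionally independent Poisson given `(W⁻, W⁺, ζ)`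
    (hcond : ∀ (m n : ℕ) (s : Set (ℝ × ℝ × ℝ)), MeasurableSet s →
      (μ {ω | Zm ω = m ∧ Zp ω = n ∧ (Wm ω, Wp ω, ζ ω) ∈ s}).toReal
        = ∫ ω in {ω | (Wm ω, Wp ω, ζ ω) ∈ s},
            poissonPdf ((∫ ω', Wp ω' ∂μ) * Wm ω / θ) m
              * poissonPdf ((∫ ω', Wm ω' ∂μ) * Wp ω / θ) n ∂μ)
    (α : ℝ) (hα : 1 < α)
    (hRV : RVtail (tailP μ Wm) α)
    (ho : (fun x => tailP μ (fun ω => Wm ω / max (Wp ω) 1) x)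
      =o[atTop] fun x => tailP μ Wm x) :
    (fun x => ∫ ω, Set.indicator
        {ω' | ζ ω' * (Zm ω' : ℝ) / ((Zp ω' : ℝ) + 1) > x} Wp ω ∂μ)
      =o[atTop] fun x => (∫ ω, Wp ω ∂μ) * tailP μ (fun ω => (Zm ω : ℝ)) x := by
  have hθpos : 0 < θ := by
    rw [hθ, integral_add hWmInt hWpInt]
    positivity
  obtain ⟨a, ha⟩ : ∃ a, a = (∫ ω, Wp ω ∂μ) / θ := ⟨_, rfl⟩
  obtain ⟨b, hb⟩ : ∃ b, b = (∫ ω, Wm ω ∂μ) / θ := ⟨_, rfl⟩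
  have ha0 : 0 < a := ha ▸ div_pos hWpPos hθpos
  have hb0 : 0 < b := hb ▸ div_pos hWmPos hθpos
  obtain ⟨T, hTdef⟩ : ∃ T : Ω → ℝ × ℝ × ℝ, T = fun ω => (Wm ω, Wp ω, ζ ω) := ⟨_, rfl⟩
  have hT : Measurable T := hTdef ▸ hWm.prodMk (hWp.prodMk hζ)
  obtain ⟨w₁, hw₁def⟩ : ∃ w : ℝ × ℝ × ℝ → ℝ, w = fun t => t.1 := ⟨_, rfl⟩
  obtain ⟨w₂, hw₂def⟩ : ∃ w : ℝ × ℝ × ℝ → ℝ, w = fun t => t.2.1 := ⟨_, rfl⟩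
  have hw₁ : Measurable w₁ := hw₁def ▸ measurable_fst
  have hw₂ : Measurable w₂ := hw₂def ▸ measurable_fst.comp measurable_snd
  have e₁ : ∀ ω, Wm ω = w₁ (T ω) := fun ω => by rw [hw₁def, hTdef]
  have e₂ : ∀ ω, Wp ω = w₂ (T ω) := fun ω => by rw [hw₂def, hTdef]
  have eF : tailP μ Wm = tailP μ fun ω => w₁ (T ω) := congrArg _ (funext e₁)
  have hJ : JointMixedPoisson μ Zm Zp T (fun ω => a * w₁ (T ω)) (fun ω => b * w₂ (T ω)) := by
    intro m n s hs
    have hpm : ∀ ω, poissonPdf ((∫ ω', Wp ω' ∂μ) * Wm ω / θ) m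
        = poissonPdf (a * w₁ (T ω)) m := fun ω => by
      rw [← e₁, ha, div_mul_eq_mul_div]
    have hpn : ∀ ω, poissonPdf ((∫ ω', Wm ω' ∂μ) * Wp ω / θ) n
        = poissonPdf (b * w₂ (T ω)) n := fun ω => by
      rw [← e₂, hb, div_mul_eq_mul_div]
    have h := hcond m n s hs
    have hTω : ∀ ω, (Wm ω, Wp ω, ζ ω) = T ω := fun ω => by rw [hTdef]
    simp only [hpm, hpn, hTω] at h
    have hle : ∀ {r : ℝ}, 0 ≤ r → ∀ k, poissonPdf r k ≤ 1 := fun {r} hr k => by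
      rw [← ENNReal.ofReal_le_one, ← tsum_poissonPdf hr]
      exact ENNReal.le_tsum k
    have hnn : ∀ᵐ ω ∂μ, 0 ≤ a * w₁ (T ω) ∧ 0 ≤ b * w₂ (T ω) := by
      filter_upwards [hWm0, hWp0] with ω h1 h2
      rw [← e₁, ← e₂]
      exact ⟨by positivity, by positivity⟩
    have hmeas : Measurable fun ω => poissonPdf (a * w₁ (T ω)) m * poissonPdf (b * w₂ (T ω)) n :=
      ((measurable_poissonPdf m).comp ((hw₁.comp hT).const_mul a)).mul
        ((measurable_poissonPdf n).comp ((hw₂.comp hT).const_mul b))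
    have hint : Integrable
        (fun ω => poissonPdf (a * w₁ (T ω)) m * poissonPdf (b * w₂ (T ω)) n) μ := by
      refine Integrable.of_bound hmeas.aestronglyMeasurable 1 ?_
      filter_upwards [hnn] with ω hω
      have p1 := poissonPdf_nonneg hω.1 m
      have p2 := poissonPdf_nonneg hω.2 n
      rw [Real.norm_of_nonneg (by positivity)]
      exact mul_le_one₀ (hle hω.1 m) p2 (hle hω.2 n)
    rw [← ENNReal.ofReal_toReal (measure_ne_top μ _), h,
      ofReal_integral_eq_lintegral_ofReal hint.integrableOn
        (ae_restrict_of_ae (hnn.mono fun ω hω =>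
          mul_nonneg (poissonPdf_nonneg hω.1 m) (poissonPdf_nonneg hω.2 n)))]
    refine lintegral_congr_ae (ae_restrict_of_ae (hnn.mono fun ω hω => ?_))
    exact ENNReal.ofReal_mul (poissonPdf_nonneg hω.1 m)
  have hw₁0 : ∀ᵐ ω ∂μ, 0 ≤ w₁ (T ω) := hWm0.mono fun ω h => e₁ ω ▸ h
  have hw₂0 : ∀ᵐ ω ∂μ, 0 ≤ w₂ (T ω) := hWp0.mono fun ω h => e₂ ω ▸ h
  have hM₁ : Measurable fun ω => a * w₁ (T ω) := (hw₁.comp hT).const_mul a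
  have hM₂ : Measurable fun ω => b * w₂ (T ω) := (hw₂.comp hT).const_mul b
  have hmix₁ := hJ.fst hZm hZp hT hM₁ hM₂ (hw₂0.mono fun ω h => mul_nonneg hb0.le h)
  have hmix₂ := hJ.symm.fst hZp hZm hT hM₂ hM₁ (hw₁0.mono fun ω h => mul_nonneg ha0.le h)
  rw [eF] at hRV
  rw [eF] at ho
  simp only [e₁, e₂] at ho
  obtain ⟨K, hK, hKle⟩ := hmix₁.exists_tailP_le hT hw₁ ha0 hw₁0 hRV
  obtain ⟨L, hL, hLle⟩ := hmix₁.exists_le_tailP hT hw₁ ha0 hRV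
  have hlint := fun {ε : ℝ} (hε : 0 < ε) => eventually_lintegral_ratio_le hZm hZp
    (tailP_nonneg μ _) hα hRV hK hKle (fun ε hε =>
      eventually_ratio_event_le hmix₁ hmix₂ hT hw₁ hw₂ ha0 hb0 hw₁0 hRV ho hε) hε
  refine IsLittleO.of_bound fun c hc => ?_
  obtain ⟨I, hI⟩ : ∃ I, I = ∫ ω, Wp ω ∂μ := ⟨_, rfl⟩
  rw [← hI] at hWpPos ⊢
  filter_upwards [hlint (show 0 < c * I * b / L by positivity), hLle, eventually_gt_atTop 0]
    with x hx hxL hx0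
  have hind0 : 0 ≤ᵐ[μ] Set.indicator
      {ω' | ζ ω' * (Zm ω' : ℝ) / ((Zp ω' : ℝ) + 1) > x} Wp :=
    hWp0.mono fun ω h => Set.indicator_apply_nonneg fun _ => h
  have hG := tailP_nonneg μ (fun ω => (Zm ω : ℝ)) x
  rw [Real.norm_of_nonneg (integral_nonneg_of_ae hind0),
    Real.norm_of_nonneg (mul_nonneg hWpPos.le hG)]
  have hset : MeasurableSet {ω' | ζ ω' * (Zm ω' : ℝ) / ((Zp ω' : ℝ) + 1) > x} := by
    refine measurableSet_lt measurable_const ?_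
    have h1 : Measurable fun ω => (Zm ω : ℝ) := measurable_from_top.comp hZm
    have h2 : Measurable fun ω => (Zp ω : ℝ) := measurable_from_top.comp hZp
    exact (hζ.mul h1).div (h2.add_const 1)
  rw [integral_eq_lintegral_of_nonneg_ae hind0 (hWp.indicator hset).aestronglyMeasurable]
  refine ENNReal.toReal_le_of_le_ofReal (by positivity) ?_
  calc ∫⁻ ω, ENNReal.ofReal (Set.indicator
          {ω' | ζ ω' * (Zm ω' : ℝ) / ((Zp ω' : ℝ) + 1) > x} Wp ω) ∂μ
      ≤ ∫⁻ ω, ENNReal.ofReal (w₂ (T ω))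
          * (if x * ((Zp ω + 1 : ℕ) : ℝ) < Zm ω then 1 else 0) ∂μ := by
        refine lintegral_mono_ae ?_
        filter_upwards [hζbd] with ω hω
        by_cases h : ω ∈ {ω' | ζ ω' * (Zm ω' : ℝ) / ((Zp ω' : ℝ) + 1) > x}
        · have h1 : x * ((Zp ω + 1 : ℕ) : ℝ) < Zm ω := by
            have h2 := (lt_div_iff₀ (by positivity)).1 (Set.mem_ofPred.1 h)
            push_cast
            exact h2.trans_le (mul_le_of_le_one_left (by positivity) ((le_abs_self _).trans hω))
          rw [Set.indicator_of_mem h, if_pos h1, mul_one, e₂]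
        · rw [Set.indicator_of_notMem h]
          simp
    _ ≤ ENNReal.ofReal b⁻¹
          * ∫⁻ ω, (Zp ω : ℝ≥0∞) * (if x * Zp ω < Zm ω then 1 else 0) ∂μ :=
        hJ.lintegral_mul_le hZm hZp hT hM₁ hw₂ hb0 hw₂0
          fun m n => if x * (n : ℝ) < m then 1 else 0
    _ ≤ ENNReal.ofReal b⁻¹
          * ENNReal.ofReal (c * I * b / L * tailP μ (fun ω => w₁ (T ω)) x) := by gcongr
    _ ≤ ENNReal.ofReal (c * (I * tailP μ (fun ω => (Zm ω : ℝ)) x)) := by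
        rw [← ENNReal.ofReal_mul (by positivity)]
        refine ENNReal.ofReal_le_ofReal ?_
        calc b⁻¹ * (c * I * b / L * tailP μ (fun ω => w₁ (T ω)) x)
            ≤ b⁻¹ * (c * I * b / L * (L * tailP μ (fun ω => (Zm ω : ℝ)) x)) := by gcongr
          _ = c * (I * tailP μ (fun ω => (Zm ω : ℝ)) x) := by field_simp
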